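/- Let τ ⊆ ℂ be a compact set and let F : 𝔻 × τ → ℝ be a continuous function such that for every α ∈ τ the map z ↦ F(z, α) is continuously differentiable on the open unit disk 𝔻 (as a real map on ℝ² ≅ ℂ), and such that the map (z, α) ↦ D_z F(z, α) (the Fréchet derivative of F in the variable z over ℝ) is continuous on 𝔻 × τ. Then for every compact set K ⊆ 𝔻 and every δ > 0 there exists a continuously differentiable function g : ℂ × ℂ → ℝ such that sup_{z ∈ K, α ∈ τ} |F(z, α) − g(z, α)| < δ and sup_{z ∈ K, α ∈ τ} ‖D_z F(z, α) − D_z g(z, α)‖ < δ. -/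

import Mathlib

open Metric

/-!
A function that is `C¹` along the leaves only has to be regularized across them, and averaging
nearby leaves does this. Over a compact subset `K` of the leaf, the leafwise `1`-jets of
`F (·, α)` and `F (·, β)` are uniformly close when `α` is close to `β`. Let `f β` be a global `C¹`
function that agrees with `F (·, β)` near `K`, and let `ρ` be a smooth partition of unity on `τ`
whose member `ρ β` is supported where this closeness holds. The weights `ρ β α` are constant along
the leaves, so the leafwise `1`-jet of `∑ β, ρ β α • f β z` at a point of `K × {α}` is a convex
combination of `1`-jets close to that of `F (·, α)`, and balls are convex.
-/

open Filter Function Set Topology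
open scoped ContDiff Manifold

section General

variable {E P G ι : Type*} [NormedAddCommGroup E] [NormedSpace ℝ E]
  [NormedAddCommGroup P] [NormedSpace ℝ P] [NormedAddCommGroup G] [NormedSpace ℝ G]

/-- The `1`-jet of `f` at `x`, encoded as the pair of its value and its derivative, so that the
product distance between `1`-jets measures `C¹` closeness. The second component is the junk value
`0` where `f` is not differentiable. -/
noncomputable def oneJet (f : E → G) (x : E) : G × (E →L[ℝ] G) :=
  (f x, fderiv ℝ f x)

theorem oneJet_congr {f g : E → G} {x : E} (h : f =ᶠ[𝓝 x] g) : oneJet f x = oneJet g x :=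
  Prod.ext h.self_of_nhds h.fderiv_eq

theorem dist_oneJet_lt_iff {f g : E → G} {x : E} {δ : ℝ} :
    dist (oneJet f x) (oneJet g x) < δ ↔
      ‖f x - g x‖ < δ ∧ ‖fderiv ℝ f x - fderiv ℝ g x‖ < δ := by
  simp only [Prod.dist_eq, max_lt_iff, oneJet, dist_eq_norm (f x), dist_eq_norm (fderiv ℝ f x)]

theorem oneJet_sum_smul {s : Finset ι} {c : ι → ℝ} {f : ι → E → G} {x : E}
    (hf : ∀ i ∈ s, DifferentiableAt ℝ (f i) x) :
    oneJet (fun y => ∑ i ∈ s, c i • f i y) x = ∑ i ∈ s, c i • oneJet (f i) x := by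
  have hderiv : HasFDerivAt (fun y => ∑ i ∈ s, c i • f i y) (∑ i ∈ s, c i • fderiv ℝ (f i) x) x :=
    HasFDerivAt.fun_sum fun i hi => (hf i hi).hasFDerivAt.const_smul (c i)
  ext1
  · simp only [oneJet, Prod.fst_sum, Prod.smul_fst]
  · simp only [oneJet, Prod.snd_sum, Prod.smul_snd, hderiv.fderiv]

theorem finsum_smul_eq_sum_toFinset {R M : Type*} [Zero R] [AddCommMonoid M] [SMulWithZero R M]
    {c : ι → R} (hc : (support c).Finite) (v : ι → M) :
    ∑ᶠ i, c i • v i = ∑ i ∈ hc.toFinset, c i • v i :=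
  finsum_eq_sum_of_support_subset _ <| (support_smul_subset_left c v).trans hc.coe_toFinset.superset

theorem oneJet_finsum_smul {c : ι → ℝ} {f : ι → E → G} {x : E} (hc : (support c).Finite)
    (hf : ∀ i ∈ support c, DifferentiableAt ℝ (f i) x) :
    oneJet (fun y => ∑ᶠ i, c i • f i y) x = ∑ᶠ i, c i • oneJet (f i) x := by
  simp only [finsum_smul_eq_sum_toFinset hc]
  exact oneJet_sum_smul fun i hi => hf i (hc.mem_toFinset.1 hi)

theorem contDiff_finsum_smul_prod {n : ℕ∞ω} {ρ : ι → P → ℝ} {f : ι → E → G}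
    (hρ : ∀ i, ContDiff ℝ n (ρ i)) (hρ_fin : LocallyFinite fun i => support (ρ i))
    (hf : ∀ i, ContDiff ℝ n (f i)) :
    ContDiff ℝ n fun p : E × P => ∑ᶠ i, ρ i p.2 • f i p.1 := by
  rw [← contMDiff_iff_contDiff]
  refine contMDiff_finsum (fun i => ContDiff.contMDiff ?_) ?_
  · exact ((hρ i).comp contDiff_snd).smul ((hf i).comp contDiff_fst)
  · exact (hρ_fin.preimage_continuous continuous_snd).subset fun i =>
      support_smul_subset_left (fun p : E × P => ρ i p.2) fun p => f i p.1

theorem contDiffOn_one_of_continuousOn_fderiv {𝕜 V W : Type*} [NontriviallyNormedField 𝕜]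
    [NormedAddCommGroup V] [NormedSpace 𝕜 V] [NormedAddCommGroup W] [NormedSpace 𝕜 W]
    {f : V → W} {U : Set V} (hU : IsOpen U) (hf : ∀ x ∈ U, DifferentiableAt 𝕜 f x)
    (hf' : ContinuousOn (fderiv 𝕜 f) U) :
    ContDiffOn 𝕜 1 f U := by
  rw [← zero_add 1, contDiffOn_succ_iff_fderiv_of_isOpen hU]
  exact ⟨fun x hx => (hf x hx).differentiableWithinAt, by simp, contDiffOn_zero.2 hf'⟩

theorem exists_contDiff_eventuallyEq_nhdsSet [FiniteDimensional ℝ E] {n : ℕ∞} {f : E → G}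
    {K U : Set E} (hK : IsClosed K) (hU : IsOpen U) (hKU : K ⊆ U) (hf : ContDiffOn ℝ n f U) :
    ∃ g : E → G, ContDiff ℝ n g ∧ g =ᶠ[𝓝ˢ K] f := by
  obtain ⟨χ, hχ_zero, hχ_one, -⟩ := exists_contMDiffMap_zero_one_nhds_of_isClosed 𝓘(ℝ, E) (n := n)
    hU.isClosed_compl hK (disjoint_compl_left_iff_subset.2 hKU)
  refine ⟨fun x => χ x • f x, contDiff_iff_contDiffAt.2 fun x => ?_, ?_⟩
  · by_cases hx : x ∈ U
    · exact χ.contMDiff.contDiff.contDiffAt.smul (hf.contDiffAt (hU.mem_nhds hx))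
    · have hχ_near : ∀ᶠ y in 𝓝 x, χ y = 0 := hχ_zero.filter_mono (nhds_le_nhdsSet hx)
      refine (contDiffAt_const (c := (0 : G))).congr_of_eventuallyEq ?_
      filter_upwards [hχ_near] with y hy
      rw [hy, zero_smul]
  · filter_upwards [hχ_one] with x hx
    rw [hx, one_smul]

theorem exists_contDiff_oneJet_mem_convex_of_local [FiniteDimensional ℝ P] {n : ℕ∞} (hn : n ≠ 0)
    {K : Set E} {τ : Set P} (hτ : IsClosed τ) {t : E → P → Set (G × (E →L[ℝ] G))}
    (ht : ∀ z ∈ K, ∀ α ∈ τ, Convex ℝ (t z α))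
    (hloc : ∀ β ∈ τ, ∃ f : E → G, ContDiff ℝ n f ∧
      ∀ᶠ α in 𝓝[τ] β, ∀ z ∈ K, oneJet f z ∈ t z α) :
    ∃ g : E × P → G, ContDiff ℝ n g ∧
      ∀ z ∈ K, ∀ α ∈ τ, oneJet (fun z' => g (z', α)) z ∈ t z α := by
  choose! f hf hft using hloc
  simp only [eventually_nhdsWithin_iff, _root_.eventually_nhds_iff] at hft
  choose! V hVt hV_open hβV using hft
  obtain ⟨ρ, hρV⟩ := SmoothPartitionOfUnity.exists_isSubordinate 𝓘(ℝ, P) hτ (fun β : τ => V β)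
    (fun β => hV_open β β.2) fun β hβ => mem_iUnion.2 ⟨⟨β, hβ⟩, hβV β hβ⟩
  refine ⟨fun p => ∑ᶠ β, ρ β p.2 • f β p.1, ?_, fun z hz α hα => ?_⟩
  · exact contDiff_finsum_smul_prod (fun β => (ρ β).contMDiff.contDiff.of_le (mod_cast le_top))
      ρ.locallyFinite fun β => hf β β.2
  · have hf_diff (β : τ) : DifferentiableAt ℝ (f β) z :=
      (hf β β.2).differentiable (mod_cast hn) z
    rw [oneJet_finsum_smul (ρ.locallyFinite.point_finite α) fun β _ => hf_diff β]
    exact ρ.finsum_smul_mem_convex (g := fun β _ => oneJet (f β) z) hα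
      (fun β hβ => hVt β β.2 α (hρV β (subset_tsupport _ hβ)) hα z hz) (ht z hz α hα)

theorem eventually_forall_dist_oneJet_lt {X : Type*} [TopologicalSpace X] {F : E → X → G}
    {K : Set E} {τ : Set X} {β : X} {δ : ℝ} (hK : IsCompact K)
    (hF : ContinuousOn (fun p : E × X => oneJet (F · p.2) p.1) (K ×ˢ τ)) (hβ : β ∈ τ)
    (hδ : 0 < δ) :
    ∀ᶠ α in 𝓝[τ] β, ∀ z ∈ K, dist (oneJet (F · α) z) (oneJet (F · β) z) < δ := by
  have hF_swap : ContinuousOn (uncurry fun α z => oneJet (F · α) z) (τ ×ˢ K) :=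
    hF.comp continuous_swap.continuousOn fun _ hp => hp.symm
  obtain ⟨v, hv, hvδ⟩ := hK.mem_uniformity_of_prod hF_swap hβ (dist_mem_uniformity hδ)
  exact eventually_of_mem hv hvδ

theorem approximation_product_lamination_general [FiniteDimensional ℝ E] [FiniteDimensional ℝ P]
    {U : Set E} (hU : IsOpen U) {τ : Set P} (hτ : IsClosed τ) {F : E → P → G}
    (hF : ContinuousOn (fun p : E × P => F p.1 p.2) (U ×ˢ τ))
    (hF_diff : ∀ α ∈ τ, ∀ z ∈ U, DifferentiableAt ℝ (F · α) z)
    (hF_fderiv : ContinuousOn (fun p : E × P => fderiv ℝ (F · p.2) p.1) (U ×ˢ τ))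
    {K : Set E} (hK : IsCompact K) (hKU : K ⊆ U) {δ : ℝ} (hδ : 0 < δ) :
    ∃ g : E × P → G, ContDiff ℝ 1 g ∧
      (∀ z ∈ K, ∀ α ∈ τ, ‖F z α - g (z, α)‖ < δ) ∧
      ∀ z ∈ K, ∀ α ∈ τ, ‖fderiv ℝ (F · α) z - fderiv ℝ (fun z' => g (z', α)) z‖ < δ := by
  have hF_leaf : ∀ β ∈ τ, ContDiffOn ℝ 1 (F · β) U := fun β hβ =>
    contDiffOn_one_of_continuousOn_fderiv hU (hF_diff β hβ) <|
      hF_fderiv.comp (Continuous.prodMk_left β).continuousOn fun z hz => ⟨hz, hβ⟩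
  have hF_jet : ContinuousOn (fun p : E × P => oneJet (F · p.2) p.1) (K ×ˢ τ) :=
    (hF.prodMk hF_fderiv).mono (prod_mono_left hKU)
  obtain ⟨g, hg, hg_jet⟩ := exists_contDiff_oneJet_mem_convex_of_local (n := 1) one_ne_zero hτ
    (t := fun z α => ball (oneJet (F · α) z) δ) (K := K) (fun _ _ _ _ => convex_ball _ _)
    fun β hβ => by
      obtain ⟨f, hf, hfF⟩ :=
        exists_contDiff_eventuallyEq_nhdsSet (n := 1) hK.isClosed hU hKU (hF_leaf β hβ)
      refine ⟨f, hf, ?_⟩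
      filter_upwards [eventually_forall_dist_oneJet_lt hK hF_jet hβ hδ] with α hα z hz
      rw [oneJet_congr (hfF.filter_mono (nhds_le_nhdsSet hz)), mem_ball']
      exact hα z hz
  simp only [mem_ball', dist_oneJet_lt_iff] at hg_jet
  exact ⟨g, hg, fun z hz α hα => (hg_jet z hz α hα).1, fun z hz α hα => (hg_jet z hz α hα).2⟩

end General

/-- Straightened form of Lemma 2.3: for the product lamination of `𝔻 × τ` by
the horizontal disks, every function which is `C¹` along the leaves with
transversally continuous leafwise derivative is a limit, in the leafwise `C¹`
topology on compact subsets, of restrictions of `C¹` functions of the ambient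
space. -/
theorem approximation_product_lamination
    (τ : Set ℂ) (hτc : IsCompact τ)
    (F : ℂ → ℂ → ℝ)
    (hFcont : ContinuousOn (fun p : ℂ × ℂ => F p.1 p.2) (ball (0 : ℂ) 1 ×ˢ τ))
    (hFdiff : ∀ α ∈ τ, ∀ z ∈ ball (0 : ℂ) 1,
      DifferentiableAt ℝ (fun z' => F z' α) z)
    (hFderiv : ContinuousOn (fun p : ℂ × ℂ => fderiv ℝ (fun z' => F z' p.2) p.1)
      (ball (0 : ℂ) 1 ×ˢ τ)) :
    ∀ K : Set ℂ, IsCompact K → K ⊆ ball (0 : ℂ) 1 →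
      ∀ δ : ℝ, 0 < δ →
        ∃ g : ℂ × ℂ → ℝ, ContDiff ℝ 1 g ∧
          (∀ z ∈ K, ∀ α ∈ τ, |F z α - g (z, α)| < δ) ∧
          (∀ z ∈ K, ∀ α ∈ τ,
            ‖fderiv ℝ (fun z' => F z' α) z -
              fderiv ℝ (fun z' => g (z', α)) z‖ < δ) := by
  exact fun _ hK hKD _ hδ => approximation_product_lamination_general isOpen_ball hτc.isClosed
    hFcont hFdiff hFderiv hK hKD hδ
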